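/- Let n(t) := (cos t, sin t, 0), fix 0 < κ² < 3, and set c_κ² := (κ² − √(κ⁴ + 16) + 4)/2. If u : ℝ → ℝ³ is C¹, 2π-periodic, and |u(t)| = 1 for all t, then the strict inequality ∫_{−π}^{π} |u'(t)|² dt + κ² ∫_{−π}^{π} |u(t) × n(t)|² dt > 2π c_κ² holds; i.e., no S²-valued configuration attains equality in the sharp Poincaré-type inequality when 0 < κ² < 3. -/

import Mathlib

open Real Set MeasureTheory

/-- Squared Euclidean norm of a vector in `ℝ³`. -/
noncomputable def sq3 (v : Fin 3 → ℝ) : ℝ := v 0 ^ 2 + v 1 ^ 2 + v 2 ^ 2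

/-- The outward unit normal `n(t) = (cos t, sin t, 0)` to the unit circle. -/
noncomputable def nvec (t : ℝ) : Fin 3 → ℝ := ![Real.cos t, Real.sin t, 0]

/-! In the moving frame of the circle, let `a` and `b` be the normal and tangential components of
the planar part of `u`, so that `|u'|² ≥ (a' - b)² + (b' + a)²` and `|u × n|² = 1 - a²`. Let `r` be
the positive root of `2r² + κ²r = 2`, so that `c_κ² = 2 - 2r`, and let `m` be the mean of `a`.
Completing squares, the energy minus `2π c_κ²` is, up to integrals of exact derivatives, the sum of
a residual that is nonnegative for `1/2 < r < 1` and of the Wirtinger deficit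
`(1 - r)² (∫ a'² - ∫ (a - m)²) ≥ 0`. If the residual vanishes then `a' = b / r`, `b' = -r a` and
`a² + b² = 1`: the solutions of this system run along ellipses of axis ratio `r ≠ 1`, which do not
lie on the unit circle. -/

section Wirtinger

lemma memLp_restrict_of_isCompact_of_continuousOn {X E : Type*} [TopologicalSpace X]
    [MeasurableSpace X] [OpensMeasurableSpace X] [NormedAddCommGroup E]
    [SecondCountableTopologyEither X E] {μ : Measure X} [IsFiniteMeasureOnCompacts μ]
    {s : Set X} {f : X → E} (hs : IsCompact s) (hsm : MeasurableSet s) (hf : ContinuousOn f s)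
    (p : ENNReal) : MemLp f p (μ.restrict s) := by
  have : IsFiniteMeasure (μ.restrict s) := ⟨by simpa using hs.measure_lt_top⟩
  obtain ⟨C, hC⟩ := hs.exists_bound_of_continuousOn hf
  exact .of_bound (hf.aestronglyMeasurable_of_isCompact hs hsm) C
    (ae_restrict_of_forall_mem hsm hC)

variable {a b : ℝ}

lemma norm_fourierCoeffOn_le_of_hasDerivAt {f f' : ℝ → ℂ} (hab : a < b)
    (hf : ContinuousOn f (Icc a b)) (hff' : ∀ t ∈ Ioo a b, HasDerivAt f (f' t) t)
    (hf' : IntervalIntegrable f' volume a b) (hclosed : f a = f b) {n : ℤ} (hn : n ≠ 0) :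
    ‖fourierCoeffOn hab f n‖ ≤ (b - a) / (2 * π) * ‖fourierCoeffOn hab f' n‖ := by
  have hcoeff : fourierCoeffOn hab f n =
      ((b - a) / (2 * π) : ℝ) * fourierCoeffOn hab f' n / (Complex.I * n) := by
    rw [fourierCoeffOn_of_hasDerivAt_Ioo hab hn (by rwa [uIcc_of_le hab.le])
      (by simpa [hab.le] using hff') hf', hclosed]
    have hpi : (π : ℂ) ≠ 0 := mod_cast pi_ne_zero
    have hn' : (n : ℂ) ≠ 0 := mod_cast hn
    push_cast
    field_simp
    ring
  have hn1 : (1 : ℝ) ≤ |(n : ℝ)| := mod_cast Int.one_le_abs hn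
  have hba : 0 ≤ (b - a) / (2 * π) := div_nonneg (sub_nonneg.2 hab.le) two_pi_pos.le
  rw [hcoeff, norm_div, norm_mul, norm_mul, Complex.norm_I, one_mul, Complex.norm_intCast,
    Complex.norm_of_nonneg hba]
  exact div_le_self (by positivity) hn1

theorem integral_norm_sq_le_of_integral_eq_zero {f f' : ℝ → ℂ} (hab : a < b)
    (hf : ContinuousOn f (Icc a b)) (hff' : ∀ t ∈ Ioo a b, HasDerivAt f (f' t) t)
    (hf' : MemLp f' 2 (volume.restrict (Ioc a b))) (hclosed : f a = f b)
    (hmean : ∫ t in a..b, f t = 0) :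
    ∫ t in a..b, ‖f t‖ ^ 2 ≤ ((b - a) / (2 * π)) ^ 2 * ∫ t in a..b, ‖f' t‖ ^ 2 := by
  have hfL2 : MemLp f 2 (volume.restrict (Ioc a b)) :=
    (memLp_restrict_of_isCompact_of_continuousOn isCompact_Icc measurableSet_Icc hf 2).mono_measure
      (Measure.restrict_mono_set _ Ioc_subset_Icc_self)
  have hf'int : IntervalIntegrable f' volume a b :=
    (intervalIntegrable_iff_integrableOn_Ioc_of_le hab.le).2 (hf'.integrable one_le_two)
  have hcoeff (n : ℤ) : ‖fourierCoeffOn hab f n‖ ^ 2 ≤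
      ((b - a) / (2 * π)) ^ 2 * ‖fourierCoeffOn hab f' n‖ ^ 2 := by
    rcases eq_or_ne n 0 with rfl | hn
    · have hzero : fourierCoeffOn hab f 0 = 0 := by
        simp [fourierCoeffOn_eq_integral, hmean]
      rw [hzero, norm_zero, zero_pow two_ne_zero]
      positivity
    · rw [← mul_pow]
      gcongr
      exact norm_fourierCoeffOn_le_of_hasDerivAt hab hf hff' hf'int hclosed hn
  have hparseval := hasSum_le hcoeff (hasSum_sq_fourierCoeffOn hab hfL2)
    ((hasSum_sq_fourierCoeffOn hab hf').mul_left _)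
  rw [smul_eq_mul, smul_eq_mul, mul_left_comm] at hparseval
  exact le_of_mul_le_mul_left hparseval (inv_pos.2 (sub_pos.2 hab))

lemma integral_sub_intervalAverage {f : ℝ → ℝ} (hab : a ≠ b)
    (hf : IntervalIntegrable f volume a b) :
    ∫ t in a..b, (f t - ⨍ s in a..b, f s) = 0 := by
  rw [intervalIntegral.integral_sub hf intervalIntegrable_const, intervalIntegral.integral_const,
    interval_average_eq, smul_smul, mul_inv_cancel₀ (sub_ne_zero.2 hab.symm), one_smul, sub_self]

theorem integral_sub_intervalAverage_sq_le {f f' : ℝ → ℝ} (hab : a < b)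
    (hf : ContinuousOn f (Icc a b)) (hff' : ∀ t ∈ Ioo a b, HasDerivAt f (f' t) t)
    (hf' : MemLp f' 2 (volume.restrict (Ioc a b))) (hclosed : f a = f b) :
    ∫ t in a..b, (f t - ⨍ s in a..b, f s) ^ 2 ≤
      ((b - a) / (2 * π)) ^ 2 * ∫ t in a..b, f' t ^ 2 := by
  have hmean : ∫ t in a..b, ((f t - ⨍ s in a..b, f s : ℝ) : ℂ) = 0 := by
    rw [intervalIntegral.integral_ofReal, integral_sub_intervalAverage hab.ne
      (hf.intervalIntegrable_of_Icc hab.le), Complex.ofReal_zero]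
  simpa only [Function.comp_apply, Pi.sub_apply, Complex.norm_real, Real.norm_eq_abs, sq_abs] using
    integral_norm_sq_le_of_integral_eq_zero hab
      (Complex.continuous_ofReal.comp_continuousOn (hf.sub continuousOn_const))
      (fun t ht => ((hff' t ht).sub_const _).ofReal_comp) hf'.ofReal (by simp [hclosed]) hmean

lemma integral_sub_intervalAverage_sq_le_integral_deriv_sq {f : ℝ → ℝ} (hf : ContDiff ℝ 1 f)
    (hclosed : f (-π) = f π) :
    ∫ t in (-π)..π, (f t - ⨍ s in (-π)..π, f s) ^ 2 ≤ ∫ t in (-π)..π, deriv f t ^ 2 := by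
  have hL2 : MemLp (deriv f) 2 (volume.restrict (Ioc (-π) π)) :=
    (memLp_restrict_of_isCompact_of_continuousOn isCompact_Icc measurableSet_Icc
      hf.continuous_deriv_one.continuousOn 2).mono_measure
      (Measure.restrict_mono_set _ Ioc_subset_Icc_self)
  have hscale : (π - -π) / (2 * π) = 1 := by field_simp; ring
  simpa only [hscale, one_pow, one_mul] using
    integral_sub_intervalAverage_sq_le (neg_lt_self pi_pos) hf.continuous.continuousOn
      (fun t _ => (hf.differentiable one_ne_zero t).hasDerivAt) hL2 hclosed

end Wirtinger

section CompletedSquare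

variable {r : ℝ} {a b : ℝ → ℝ}

/-- The residual left when the energy of a closed curve with moving-frame components `a`, `b` is
written as a sum of squares, where `m` stands for the mean of `a`. For `m = 0` it vanishes exactly
along the extremals `(a, b) = A (cos (t - φ), -r sin (t - φ))`. -/
noncomputable def squareResidual (r m : ℝ) (a b : ℝ → ℝ) (t : ℝ) : ℝ :=
  (2 * r - 1) * m ^ 2 + (deriv b t + r * (a t - m)) ^ 2 + (2 / r - 1) * (b t - r * deriv a t) ^ 2

lemma continuous_squareResidual (ha : ContDiff ℝ 1 a) (hb : ContDiff ℝ 1 b) (r m : ℝ) :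
    Continuous (squareResidual r m a b) := by
  have := ha.continuous_deriv_one
  have := hb.continuous_deriv_one
  have := ha.continuous
  have := hb.continuous
  unfold squareResidual
  fun_prop

lemma squareResidual_nonneg (hr : 1 / 2 ≤ r) (hr2 : r ≤ 2) (m : ℝ) (a b : ℝ → ℝ) (t : ℝ) :
    0 ≤ squareResidual r m a b t := by
  have h1 : 0 ≤ 2 * r - 1 := by linarith
  have h2 : 0 ≤ 2 / r - 1 := sub_nonneg.2 ((one_le_div (by linarith)).2 hr2)
  unfold squareResidual
  positivity

lemma deriv_eq_of_squareResidual_eq_zero {m t : ℝ} (hr : 1 / 2 < r) (hr2 : r < 2)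
    (h : squareResidual r m a b t = 0) :
    deriv a t = b t / r ∧ deriv b t = -(r * a t) := by
  have h1 : 0 < 2 * r - 1 := by linarith
  have h2 : 0 < 2 / r - 1 := sub_pos.2 ((one_lt_div (by linarith)).2 hr2)
  have hr0 : r ≠ 0 := by linarith
  rw [squareResidual, add_eq_zero_iff_of_nonneg (by positivity) (by positivity),
    add_eq_zero_iff_of_nonneg (by positivity) (by positivity)] at h
  obtain ⟨⟨hm, hb⟩, ha⟩ := h
  simp only [mul_eq_zero, h1.ne', h2.ne', pow_eq_zero_iff two_ne_zero, false_or] at hm hb ha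
  subst hm
  constructor
  · field_simp
    linarith
  · linarith

lemma energy_eq_squareResidual_add (hr : r ≠ 0) (m : ℝ) (a b : ℝ → ℝ) (t : ℝ) :
    (deriv a t - b t) ^ 2 + (deriv b t + a t) ^ 2 + (2 / r - 2 * r) * b t ^ 2
        - (2 - 2 * r) * (a t ^ 2 + b t ^ 2) =
      squareResidual r m a b t + (1 - r) ^ 2 * (deriv a t ^ 2 - (a t - m) ^ 2)
        + (2 * (1 - r) * (deriv a t * b t + a t * deriv b t) + 2 * r * m * deriv b t
          + 2 * (2 * r - 1) * m * (a t - m)) := by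
  unfold squareResidual
  field_simp
  ring

theorem integral_squareResidual_le (hr : r ≠ 0) (ha : ContDiff ℝ 1 a) (hb : ContDiff ℝ 1 b)
    (ha_closed : a (-π) = a π) (hb_closed : b (-π) = b π) :
    ∫ t in (-π)..π, squareResidual r (⨍ s in (-π)..π, a s) a b t ≤
      ∫ t in (-π)..π, ((deriv a t - b t) ^ 2 + (deriv b t + a t) ^ 2
        + (2 / r - 2 * r) * b t ^ 2 - (2 - 2 * r) * (a t ^ 2 + b t ^ 2)) := by
  set m := ⨍ s in (-π)..π, a s
  have hac := ha.continuous
  have hbc := hb.continuous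
  have ha' := ha.continuous_deriv_one
  have hb' := hb.continuous_deriv_one
  have hres := continuous_squareResidual ha hb r m
  have hint {g : ℝ → ℝ} (hg : Continuous g) : IntervalIntegrable g volume (-π) π :=
    hg.intervalIntegrable _ _
  have hda (t : ℝ) : HasDerivAt a (deriv a t) t := (ha.differentiable one_ne_zero t).hasDerivAt
  have hdb (t : ℝ) : HasDerivAt b (deriv b t) t := (hb.differentiable one_ne_zero t).hasDerivAt
  have hprod : ∫ t in (-π)..π, (deriv a t * b t + a t * deriv b t) = 0 := by
    rw [intervalIntegral.integral_deriv_mul_eq_sub (fun t _ => hda t) (fun t _ => hdb t)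
      (hint ha') (hint hb'), ha_closed, hb_closed, sub_self]
  have hderiv : ∫ t in (-π)..π, deriv b t = 0 := by
    rw [intervalIntegral.integral_eq_sub_of_hasDerivAt (fun t _ => hdb t) (hint hb'), hb_closed,
      sub_self]
  have hmean : ∫ t in (-π)..π, (a t - m) = 0 :=
    integral_sub_intervalAverage (neg_lt_self pi_pos).ne (hint hac)
  have hwirtinger : ∫ t in (-π)..π, (a t - m) ^ 2 ≤ ∫ t in (-π)..π, deriv a t ^ 2 :=
    integral_sub_intervalAverage_sq_le_integral_deriv_sq ha ha_closed
  simp_rw [energy_eq_squareResidual_add hr m a b]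
  rw [intervalIntegral.integral_add (hint (by fun_prop)) (hint (by fun_prop)),
    intervalIntegral.integral_add (hint (by fun_prop)) (hint (by fun_prop)),
    intervalIntegral.integral_add (hint (by fun_prop)) (hint (by fun_prop)),
    intervalIntegral.integral_add (hint (by fun_prop)) (hint (by fun_prop))]
  simp only [intervalIntegral.integral_const_mul, hprod, hderiv, hmean, mul_zero, add_zero]
  rw [intervalIntegral.integral_sub (hint (by fun_prop)) (hint (by fun_prop))]
  have := mul_nonneg (sq_nonneg (1 - r)) (sub_nonneg.2 hwirtinger)
  linarith

end CompletedSquare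

section Rigidity

variable {r : ℝ} {a b : ℝ → ℝ}

lemma eq_zero_of_hasDerivAt_of_sq_add_sq_eventuallyEq_const {t₀ ρ : ℝ}
    (hr : r ≠ 0) (hr1 : r ^ 2 ≠ 1)
    (ha : ∀ᶠ t in nhds t₀, HasDerivAt a (b t / r) t)
    (hb : ∀ᶠ t in nhds t₀, HasDerivAt b (-(r * a t)) t)
    (hconst : ∀ᶠ t in nhds t₀, a t ^ 2 + b t ^ 2 = ρ) :
    a t₀ = 0 ∧ b t₀ = 0 := by
  have hprod : ∀ᶠ t in nhds t₀, a t * b t = 0 := by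
    filter_upwards [ha, hb, hconst.eventually_nhds] with t hat hbt ht
    have hderiv : 2 * a t * (b t / r) + 2 * b t * -(r * a t) = 0 := by
      simpa using ((hat.fun_pow 2).fun_add (hbt.fun_pow 2)).congr_of_eventuallyEq
        (Filter.EventuallyEq.symm ht) |>.unique (hasDerivAt_const t ρ)
    field_simp at hderiv
    have hfactor : (1 - r ^ 2) * (a t * b t) = 0 := by linarith
    exact (mul_eq_zero.1 hfactor).resolve_left (sub_ne_zero.2 hr1.symm)
  have hderiv : b t₀ / r * b t₀ + a t₀ * -(r * a t₀) = 0 :=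
    (ha.self_of_nhds.fun_mul hb.self_of_nhds).congr_of_eventuallyEq
      (Filter.EventuallyEq.symm hprod) |>.unique (hasDerivAt_const t₀ 0)
  rcases mul_eq_zero.1 hprod.self_of_nhds with h | h
  · simpa [h, hr] using hderiv
  · simpa [h, hr] using hderiv

lemma exists_squareResidual_add_pos (hr : 1 / 2 < r) (hr1 : r < 1)
    (ha : Differentiable ℝ a) (hb : Differentiable ℝ b) (m : ℝ)
    (hdisc : ∀ t ∈ Icc (-π) π, a t ^ 2 + b t ^ 2 ≤ 1) :
    ∃ t ∈ Icc (-π) π,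
      0 < squareResidual r m a b t + (2 / r - 2) * (1 - (a t ^ 2 + b t ^ 2)) := by
  have hcoef : 0 < 2 / r - 2 := sub_pos.2 ((lt_div_iff₀ (by linarith)).2 (by linarith))
  by_contra! hcon
  have hzero : ∀ t ∈ Icc (-π) π, squareResidual r m a b t = 0 ∧ a t ^ 2 + b t ^ 2 = 1 := by
    intro t ht
    have h1 := squareResidual_nonneg hr.le (by linarith) m a b t
    have h2 := mul_nonneg hcoef.le (sub_nonneg.2 (hdisc t ht))
    have hres : squareResidual r m a b t = 0 := by linarith [hcon t ht]
    have hdef : (2 / r - 2) * (1 - (a t ^ 2 + b t ^ 2)) = 0 := by linarith [hcon t ht]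
    exact ⟨hres, (sub_eq_zero.1 ((mul_eq_zero.1 hdef).resolve_left hcoef.ne')).symm⟩
  have hnhds : ∀ᶠ t in nhds (0 : ℝ), t ∈ Icc (-π) π :=
    Icc_mem_nhds (neg_lt_zero.2 pi_pos) pi_pos
  have hode (t : ℝ) (ht : t ∈ Icc (-π) π) :=
    deriv_eq_of_squareResidual_eq_zero hr (by linarith) (hzero t ht).1
  obtain ⟨ha0, hb0⟩ := eq_zero_of_hasDerivAt_of_sq_add_sq_eventuallyEq_const (by linarith)
    (pow_lt_one₀ (by linarith) hr1 two_ne_zero).ne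
    (hnhds.mono fun t ht => (hode t ht).1 ▸ (ha t).hasDerivAt)
    (hnhds.mono fun t ht => (hode t ht).2 ▸ (hb t).hasDerivAt)
    (hnhds.mono fun t ht => (hzero t ht).2)
  simpa [ha0, hb0] using (hzero 0 hnhds.self_of_nhds).2

theorem two_pi_mul_lt_integral_of_sq_add_sq_le_one (hr : 1 / 2 < r) (hr1 : r < 1)
    (ha : ContDiff ℝ 1 a) (hb : ContDiff ℝ 1 b) (ha_closed : a (-π) = a π)
    (hb_closed : b (-π) = b π)
    (hdisc : ∀ t ∈ Icc (-π) π, a t ^ 2 + b t ^ 2 ≤ 1) :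
    2 * π * (2 - 2 * r) <
      ∫ t in (-π)..π, ((deriv a t - b t) ^ 2 + (deriv b t + a t) ^ 2
        + (2 / r - 2 * r) * (1 - a t ^ 2)) := by
  set m := ⨍ s in (-π)..π, a s
  have := ha.continuous
  have := hb.continuous
  have := ha.continuous_deriv_one
  have := hb.continuous_deriv_one
  have hres := continuous_squareResidual ha hb r m
  have hint {g : ℝ → ℝ} (hg : Continuous g) : IntervalIntegrable g volume (-π) π :=
    hg.intervalIntegrable _ _
  have hcoef : 0 ≤ 2 / r - 2 := sub_nonneg.2 ((le_div_iff₀ (by linarith)).2 (by linarith))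
  have hpos : 0 < ∫ t in (-π)..π,
      (squareResidual r m a b t + (2 / r - 2) * (1 - (a t ^ 2 + b t ^ 2))) := by
    refine intervalIntegral.integral_pos (neg_lt_self pi_pos) (by fun_prop) (fun t ht => ?_)
      (exists_squareResidual_add_pos hr hr1 (ha.differentiable one_ne_zero)
        (hb.differentiable one_ne_zero) m hdisc)
    exact add_nonneg (squareResidual_nonneg hr.le (by linarith) m a b t)
      (mul_nonneg hcoef (sub_nonneg.2 (hdisc t (Ioc_subset_Icc_self ht))))
  rw [intervalIntegral.integral_add (hint hres) (hint (by fun_prop))] at hpos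
  have hsplit : ∫ t in (-π)..π, ((deriv a t - b t) ^ 2 + (deriv b t + a t) ^ 2
        + (2 / r - 2 * r) * (1 - a t ^ 2)) =
      (∫ t in (-π)..π, ((deriv a t - b t) ^ 2 + (deriv b t + a t) ^ 2
          + (2 / r - 2 * r) * b t ^ 2 - (2 - 2 * r) * (a t ^ 2 + b t ^ 2)))
        + (∫ t in (-π)..π, (2 / r - 2) * (1 - (a t ^ 2 + b t ^ 2)))
        + ∫ _ in (-π)..π, (2 - 2 * r) := by
    rw [← intervalIntegral.integral_add (hint (by fun_prop)) (hint (by fun_prop)),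
      ← intervalIntegral.integral_add (hint (by fun_prop)) (hint (by fun_prop))]
    congr! 2 with t
    ring
  rw [hsplit, intervalIntegral.integral_const, smul_eq_mul]
  linarith [integral_squareResidual_le (by linarith) ha hb ha_closed hb_closed (r := r)]

end Rigidity

section MovingFrame

variable {x y : ℝ → ℝ}

/-- The component of the planar curve `(x, y)` along the unit normal `(cos t, sin t)`. -/
noncomputable def normalPart (x y : ℝ → ℝ) (t : ℝ) : ℝ := x t * cos t + y t * sin t

/-- The component of the planar curve `(x, y)` along the unit tangent `(-sin t, cos t)`. -/
noncomputable def tangentialPart (x y : ℝ → ℝ) (t : ℝ) : ℝ := y t * cos t - x t * sin t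

lemma normalPart_sq_add_tangentialPart_sq (x y : ℝ → ℝ) (t : ℝ) :
    normalPart x y t ^ 2 + tangentialPart x y t ^ 2 = x t ^ 2 + y t ^ 2 := by
  unfold normalPart tangentialPart
  linear_combination (x t ^ 2 + y t ^ 2) * sin_sq_add_cos_sq t

lemma contDiff_normalPart {n : WithTop ℕ∞} (hx : ContDiff ℝ n x) (hy : ContDiff ℝ n y) :
    ContDiff ℝ n (normalPart x y) :=
  (hx.mul contDiff_cos).add (hy.mul contDiff_sin)

lemma contDiff_tangentialPart {n : WithTop ℕ∞} (hx : ContDiff ℝ n x) (hy : ContDiff ℝ n y) :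
    ContDiff ℝ n (tangentialPart x y) :=
  (hy.mul contDiff_cos).sub (hx.mul contDiff_sin)

lemma deriv_normalPart {t : ℝ} (hx : DifferentiableAt ℝ x t) (hy : DifferentiableAt ℝ y t) :
    deriv (normalPart x y) t = normalPart (deriv x) (deriv y) t + tangentialPart x y t := by
  have h := (hx.hasDerivAt.mul (hasDerivAt_cos t)).add (hy.hasDerivAt.mul (hasDerivAt_sin t))
  refine h.deriv.trans ?_
  unfold normalPart tangentialPart
  ring

lemma deriv_tangentialPart {t : ℝ} (hx : DifferentiableAt ℝ x t) (hy : DifferentiableAt ℝ y t) :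
    deriv (tangentialPart x y) t = tangentialPart (deriv x) (deriv y) t - normalPart x y t := by
  have h := (hy.hasDerivAt.mul (hasDerivAt_cos t)).sub (hx.hasDerivAt.mul (hasDerivAt_sin t))
  refine h.deriv.trans ?_
  unfold normalPart tangentialPart
  ring

lemma movingFrame_speed_sq {t : ℝ} (hx : DifferentiableAt ℝ x t) (hy : DifferentiableAt ℝ y t) :
    (deriv (normalPart x y) t - tangentialPart x y t) ^ 2
        + (deriv (tangentialPart x y) t + normalPart x y t) ^ 2 =
      deriv x t ^ 2 + deriv y t ^ 2 := by
  rw [deriv_normalPart hx hy, deriv_tangentialPart hx hy, add_sub_cancel_right, sub_add_cancel,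
    normalPart_sq_add_tangentialPart_sq]

end MovingFrame

section ExtremalRatio

/-- The axis ratio `r` of the elliptical extremals: the positive root of `2r² + κ²r = 2`. In terms
of it the sharp constant is `c_κ² = 2 - 2r`. -/
noncomputable def extremalRatio (κ : ℝ) : ℝ := (√(κ ^ 4 + 16) - κ ^ 2) / 4

lemma half_lt_extremalRatio {κ : ℝ} (hκ : κ ^ 2 < 3) : 1 / 2 < extremalRatio κ := by
  have h : κ ^ 2 + 2 < √(κ ^ 4 + 16) := lt_sqrt_of_sq_lt (by linear_combination 4 * hκ)
  unfold extremalRatio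
  linarith

lemma extremalRatio_lt_one {κ : ℝ} (hκ : 0 < κ ^ 2) : extremalRatio κ < 1 := by
  have h : √(κ ^ 4 + 16) < κ ^ 2 + 4 :=
    (sqrt_lt' (by linarith)).2 (by linear_combination 8 * hκ)
  unfold extremalRatio
  linarith

lemma extremalRatio_pos (κ : ℝ) : 0 < extremalRatio κ := by
  have h : κ ^ 2 < √(κ ^ 4 + 16) := lt_sqrt_of_sq_lt (by linarith [pow_mul κ 2 2])
  unfold extremalRatio
  linarith

lemma two_div_extremalRatio_sub (κ : ℝ) :
    2 / extremalRatio κ - 2 * extremalRatio κ = κ ^ 2 := by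
  have hroot : 2 * extremalRatio κ ^ 2 + κ ^ 2 * extremalRatio κ = 2 := by
    unfold extremalRatio
    linear_combination sq_sqrt (show 0 ≤ κ ^ 4 + 16 by positivity) / 8
  have := (extremalRatio_pos κ).ne'
  field_simp
  linarith

end ExtremalRatio

lemma sq3_crossProduct_nvec (v : Fin 3 → ℝ) (t : ℝ) :
    sq3 (crossProduct v (nvec t)) = sq3 v - (v 0 * cos t + v 1 * sin t) ^ 2 := by
  simp only [sq3, nvec, cross_apply, Matrix.cons_val, mul_zero]
  linear_combination (v 0 ^ 2 + v 1 ^ 2 + v 2 ^ 2) * sin_sq_add_cos_sq t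

lemma integral_planar_speed_sq_le {u : ℝ → Fin 3 → ℝ} (hu : ContDiff ℝ 1 u) {s₁ s₂ : ℝ}
    (hs : s₁ ≤ s₂) :
    ∫ t in s₁..s₂, (deriv (u · 0) t ^ 2 + deriv (u · 1) t ^ 2) ≤
      ∫ t in s₁..s₂, sq3 (deriv u t) := by
  have hderiv (i : Fin 3) (t : ℝ) : deriv (u · i) t = deriv u t i :=
    (hasDerivAt_pi.1 (hu.differentiable one_ne_zero t).hasDerivAt i).deriv
  have := hu.continuous_deriv_one
  simp_rw [hderiv]
  unfold sq3
  refine intervalIntegral.integral_mono hs (Continuous.intervalIntegrable (by fun_prop) _ _)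
    (Continuous.intervalIntegrable (by fun_prop) _ _) fun t => ?_
  exact le_add_of_nonneg_right (sq_nonneg _)

theorem no_sphere_valued_equality_small_kappa_general
    (κ : ℝ) (hκ : 0 < κ ^ 2) (hκ3 : κ ^ 2 < 3) {x y : ℝ → ℝ}
    (hx : ContDiff ℝ 1 x) (hy : ContDiff ℝ 1 y) (hx_closed : x (-π) = x π)
    (hy_closed : y (-π) = y π)
    (hdisc : ∀ t ∈ Icc (-π) π, x t ^ 2 + y t ^ 2 ≤ 1) :
    2 * π * ((κ ^ 2 - √(κ ^ 4 + 16) + 4) / 2) <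
      (∫ t in (-π)..π, (deriv x t ^ 2 + deriv y t ^ 2))
        + κ ^ 2 * ∫ t in (-π)..π, (1 - normalPart x y t ^ 2) := by
  have := hx.continuous_deriv_one
  have := hy.continuous_deriv_one
  have := (contDiff_normalPart hx hy).continuous
  have hstrict := two_pi_mul_lt_integral_of_sq_add_sq_le_one
    (half_lt_extremalRatio hκ3) (extremalRatio_lt_one hκ)
    (contDiff_normalPart hx hy) (contDiff_tangentialPart hx hy)
    (by simp [normalPart, hx_closed]) (by simp [tangentialPart, hy_closed])
    (by simpa only [normalPart_sq_add_tangentialPart_sq] using hdisc)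
  simp only [two_div_extremalRatio_sub, movingFrame_speed_sq (hx.differentiable one_ne_zero _)
    (hy.differentiable one_ne_zero _)] at hstrict
  rw [intervalIntegral.integral_add (Continuous.intervalIntegrable (by fun_prop) _ _)
    (Continuous.intervalIntegrable (by fun_prop) _ _),
    intervalIntegral.integral_const_mul] at hstrict
  refine lt_of_eq_of_lt ?_ hstrict
  unfold extremalRatio
  ring

/-- **No `S²`-valued configuration attains equality in the sharp Poincaré-type
inequality when `0 < κ² < 3`**: for unit-norm `C¹` `2π`-periodic maps the strict
inequality `∫ |u'|² + κ² ∫ |u × n|² > 2π c_κ²` holds, where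
`c_κ² = (κ² − √(κ⁴+16) + 4)/2`. -/
theorem no_sphere_valued_equality_small_kappa
    (κ : ℝ) (hκ : 0 < κ ^ 2) (hκ3 : κ ^ 2 < 3)
    (u : ℝ → Fin 3 → ℝ)
    (hu : ContDiff ℝ 1 u)
    (hper : ∀ t : ℝ, u (t + 2 * π) = u t)
    (hunit : ∀ t : ℝ, sq3 (u t) = 1) :
    2 * π * ((κ ^ 2 - Real.sqrt (κ ^ 4 + 16) + 4) / 2) <
      (∫ t in (-π)..π, sq3 (deriv u t))
        + κ ^ 2 * ∫ t in (-π)..π, sq3 (crossProduct (u t) (nvec t)) := by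
  have hclosed : u (-π) = u π := by rw [← hper (-π)]; ring_nf
  have hdisc (t : ℝ) : u t 0 ^ 2 + u t 1 ^ 2 ≤ 1 := by
    rw [← hunit t, sq3]
    exact le_add_of_nonneg_right (sq_nonneg _)
  simp only [sq3_crossProduct_nvec, hunit]
  exact (no_sphere_valued_equality_small_kappa_general κ hκ hκ3 (contDiff_pi.1 hu 0)
    (contDiff_pi.1 hu 1) (congrFun hclosed 0) (congrFun hclosed 1) fun t _ => hdisc t).trans_le
      (add_le_add_left (integral_planar_speed_sq_le hu (neg_lt_self pi_pos).le) _)
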